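/- (Guard_NA for Needham–Schroeder–Lowe.) If evs ∈ nsl, A ∉ bad, B ∉ bad and Says A B (Crypt (pubK B) ⟨Nonce NA, Agent A⟩) ∈ set evs, then Guard NA {priK A, priK B} (spies evs), i.e. the nonce NA is guarded in all traffic by the private keys of A and B. -/

import Mathlib

inductive agent : Type
  | Server : agent
  | Friend : ℕ → agent
  | Spy : agent
deriving DecidableEq

inductive msg : Type
  | Agent : agent → msg
  | Number : ℕ → msg
  | Nonce : ℕ → msg
  | Key : ℕ → msg
  | Hash : msg → msg
  | MPair : msg → msg → msg
  | Crypt : ℕ → msg → msg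
deriving DecidableEq

inductive partsP (H : Set msg) : msg → Prop
  | Inj : ∀ X, X ∈ H → partsP H X
  | Fst : ∀ X Y, partsP H (msg.MPair X Y) → partsP H X
  | Snd : ∀ X Y, partsP H (msg.MPair X Y) → partsP H Y
  | Body : ∀ K X, partsP H (msg.Crypt K X) → partsP H X

/-- `parts H`: sub-components of messages of `H`. -/
def parts (H : Set msg) : Set msg := {X | partsP H X}

inductive analzP (invKey : ℕ → ℕ) (H : Set msg) : msg → Prop
  | Inj : ∀ X, X ∈ H → analzP invKey H X
  | Fst : ∀ X Y, analzP invKey H (msg.MPair X Y) → analzP invKey H X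
  | Snd : ∀ X Y, analzP invKey H (msg.MPair X Y) → analzP invKey H Y
  | Decrypt : ∀ K X, analzP invKey H (msg.Crypt K X) →
      analzP invKey H (msg.Key (invKey K)) → analzP invKey H X

/-- `analz invKey H`: what can be obtained by decomposing and decrypting messages of `H`. -/
def analz (invKey : ℕ → ℕ) (H : Set msg) : Set msg := {X | analzP invKey H X}

inductive synthP (H : Set msg) : msg → Prop
  | Inj : ∀ X, X ∈ H → synthP H X
  | Ag : ∀ a, synthP H (msg.Agent a)
  | Num : ∀ n, synthP H (msg.Number n)
  | Hsh : ∀ X, synthP H X → synthP H (msg.Hash X)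
  | Pr : ∀ X Y, synthP H X → synthP H Y → synthP H (msg.MPair X Y)
  | Cry : ∀ K X, synthP H X → msg.Key K ∈ H → synthP H (msg.Crypt K X)

/-- `synth H`: messages that can be synthesized from `H`. -/
def synth (H : Set msg) : Set msg := {X | synthP H X}

inductive guardP (invKey : ℕ → ℕ) (n : ℕ) (Ks : Set ℕ) : msg → Prop
  | No_Nonce : ∀ X, msg.Nonce n ∉ parts {X} → guardP invKey n Ks X
  | Guard : ∀ K X, invKey K ∈ Ks → guardP invKey n Ks (msg.Crypt K X)
  | Cry : ∀ K X, guardP invKey n Ks X → guardP invKey n Ks (msg.Crypt K X)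
  | Pr : ∀ X Y, guardP invKey n Ks X → guardP invKey n Ks Y →
      guardP invKey n Ks (msg.MPair X Y)

/-- `guard n Ks`: messages in which `Nonce n` is guarded by the keys of `Ks`. -/
def guardMsg (invKey : ℕ → ℕ) (n : ℕ) (Ks : Set ℕ) : Set msg := {X | guardP invKey n Ks X}

/-- `Guard n Ks H`: every message of `H` lies in `guard n Ks`. -/
def Guard (invKey : ℕ → ℕ) (n : ℕ) (Ks : Set ℕ) (H : Set msg) : Prop :=
  ∀ X ∈ H, X ∈ guardMsg invKey n Ks
inductive event : Type
  | Says : agent → agent → msg → event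
deriving DecidableEq

def msgOf : event → msg
  | event.Says _ _ X => X

/-- Set of messages sent in a trace. -/
def sent (evs : List event) : Set msg :=
  {X | ∃ A B, event.Says A B X ∈ evs}
/-- Private key of an agent: the inverse of its public key. -/
def priK (invKey : ℕ → ℕ) (pubK : agent → ℕ) (A : agent) : ℕ := invKey (pubK A)

/-- Initial knowledge of each agent in a public-key infrastructure:
every agent knows its own private key and all public keys; the spy moreover
knows the private keys of the bad agents. -/
def initStatePK (invKey : ℕ → ℕ) (pubK : agent → ℕ) (bad : Set agent) : agent → Set msg :=
  fun A =>
    match A with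
    | agent.Spy =>
        {X | ∃ B ∈ bad, X = msg.Key (priK invKey pubK B)} ∪ {X | ∃ B, X = msg.Key (pubK B)}
    | _ => {msg.Key (priK invKey pubK A)} ∪ {X | ∃ B, X = msg.Key (pubK B)}

/-- `spies evs`: the private keys of the bad agents, all public keys, and
every message sent in `evs`. -/
def spiesPK (invKey : ℕ → ℕ) (pubK : agent → ℕ) (bad : Set agent) (evs : List event) :
    Set msg :=
  initStatePK invKey pubK bad agent.Spy ∪ sent evs

/-- `used evs`: parts of all agents' initial knowledge and of all messages sent in `evs`. -/
def usedPK (invKey : ℕ → ℕ) (pubK : agent → ℕ) (bad : Set agent) (evs : List event) :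
    Set msg :=
  parts ((⋃ A, initStatePK invKey pubK bad A) ∪ sent evs)
/-- The Needham–Schroeder–Lowe protocol. -/
inductive nsl (invKey : ℕ → ℕ) (pubK : agent → ℕ) (bad : Set agent) : List event → Prop
  | Nil : nsl invKey pubK bad []
  | Fake : ∀ evs B X, nsl invKey pubK bad evs →
      X ∈ synth (analz invKey (spiesPK invKey pubK bad evs)) →
      nsl invKey pubK bad (event.Says agent.Spy B X :: evs)
  | NS1 : ∀ evs A B NA, nsl invKey pubK bad evs →
      msg.Nonce NA ∉ usedPK invKey pubK bad evs →
      nsl invKey pubK bad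
        (event.Says A B (msg.Crypt (pubK B) (msg.MPair (msg.Nonce NA) (msg.Agent A))) :: evs)
  | NS2 : ∀ evs A A' B NA NB, nsl invKey pubK bad evs →
      msg.Nonce NB ∉ usedPK invKey pubK bad evs →
      event.Says A' B (msg.Crypt (pubK B) (msg.MPair (msg.Nonce NA) (msg.Agent A))) ∈ evs →
      nsl invKey pubK bad
        (event.Says B A (msg.Crypt (pubK A)
          (msg.MPair (msg.Nonce NA) (msg.MPair (msg.Nonce NB) (msg.Agent B)))) :: evs)
  | NS3 : ∀ evs A B B' NA NB, nsl invKey pubK bad evs →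
      event.Says A B (msg.Crypt (pubK B) (msg.MPair (msg.Nonce NA) (msg.Agent A))) ∈ evs →
      event.Says B' A (msg.Crypt (pubK A)
        (msg.MPair (msg.Nonce NA) (msg.MPair (msg.Nonce NB) (msg.Agent B)))) ∈ evs →
      nsl invKey pubK bad (event.Says A B (msg.Crypt (pubK B) (msg.Nonce NB)) :: evs)



theorem partsP_iff (H : Set msg) (X : msg) : partsP H X ↔ ∃ Y ∈ H, partsP {Y} X := by
  constructor
  · intro h
    induction h with
    | Inj X h => exact ⟨X, h, .Inj _ rfl⟩
    | Fst X Y _ ih => obtain ⟨Z, hZ, h⟩ := ih; exact ⟨Z, hZ, .Fst _ _ h⟩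
    | Snd X Y _ ih => obtain ⟨Z, hZ, h⟩ := ih; exact ⟨Z, hZ, .Snd _ _ h⟩
    | Body K X _ ih => obtain ⟨Z, hZ, h⟩ := ih; exact ⟨Z, hZ, .Body _ _ h⟩
  · rintro ⟨Y, hY, h⟩
    induction h with
    | Inj X h => cases h; exact .Inj _ hY
    | Fst X Y _ ih => exact .Fst _ _ ih
    | Snd X Y _ ih => exact .Snd _ _ ih
    | Body K X _ ih => exact .Body _ _ ih

theorem partsP_trans {H : Set msg} {X Y : msg} (h1 : partsP H Y) (h2 : partsP {Y} X) :
    partsP H X := by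
  induction h2 with
  | Inj X h => cases h; exact h1
  | Fst X Y _ ih => exact .Fst _ _ ih
  | Snd X Y _ ih => exact .Snd _ _ ih
  | Body K X _ ih => exact .Body _ _ ih

theorem partsP_agent (a X) : partsP {msg.Agent a} X ↔ X = msg.Agent a := by
  constructor
  · intro h; induction h <;> simp_all
  · rintro rfl; exact .Inj _ rfl

theorem partsP_number (a X) : partsP {msg.Number a} X ↔ X = msg.Number a := by
  constructor
  · intro h; induction h <;> simp_all
  · rintro rfl; exact .Inj _ rfl

theorem partsP_nonce (a X) : partsP {msg.Nonce a} X ↔ X = msg.Nonce a := by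
  constructor
  · intro h; induction h <;> simp_all
  · rintro rfl; exact .Inj _ rfl

theorem partsP_key (a X) : partsP {msg.Key a} X ↔ X = msg.Key a := by
  constructor
  · intro h; induction h <;> simp_all
  · rintro rfl; exact .Inj _ rfl

theorem partsP_hash (a X) : partsP {msg.Hash a} X ↔ X = msg.Hash a := by
  constructor
  · intro h; induction h <;> simp_all
  · rintro rfl; exact .Inj _ rfl

theorem partsP_crypt (K Y X) :
    partsP {msg.Crypt K Y} X ↔ X = msg.Crypt K Y ∨ partsP {Y} X := by
  constructor
  · intro h
    induction h with
    | Inj X h => exact .inl h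
    | Fst X Z _ ih => rcases ih with h | h; · cases h
                      exact .inr (.Fst _ _ h)
    | Snd X Z _ ih => rcases ih with h | h; · cases h
                      exact .inr (.Snd _ _ h)
    | Body K X _ ih => rcases ih with h | h; · cases h; exact .inr (.Inj _ rfl)
                       exact .inr (.Body _ _ h)
  · rintro (rfl | h)
    · exact .Inj _ rfl
    · exact partsP_trans (.Body _ _ (.Inj _ rfl)) h

theorem partsP_pair (Z Y X) :
    partsP {msg.MPair Z Y} X ↔ X = msg.MPair Z Y ∨ partsP {Z} X ∨ partsP {Y} X := by
  constructor
  · intro h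
    induction h with
    | Inj X h => exact .inl h
    | Fst X Z _ ih => rcases ih with h | h | h
                      · cases h; exact .inr (.inl (.Inj _ rfl))
                      · exact .inr (.inl (.Fst _ _ h))
                      · exact .inr (.inr (.Fst _ _ h))
    | Snd X Z _ ih => rcases ih with h | h | h
                      · cases h; exact .inr (.inr (.Inj _ rfl))
                      · exact .inr (.inl (.Snd _ _ h))
                      · exact .inr (.inr (.Snd _ _ h))
    | Body K X _ ih => rcases ih with h | h | h
                       · cases h
                       · exact .inr (.inl (.Body _ _ h))
                       · exact .inr (.inr (.Body _ _ h))
  · rintro (rfl | h | h)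
    · exact .Inj _ rfl
    · exact partsP_trans (.Fst _ _ (.Inj _ rfl)) h
    · exact partsP_trans (.Snd _ _ (.Inj _ rfl)) h

theorem analz_parts {invKey : ℕ → ℕ} {H : Set msg} {X : msg} (h : analzP invKey H X) :
    partsP H X := by
  induction h with
  | Inj X h => exact .Inj _ h
  | Fst X Y _ ih => exact .Fst _ _ ih
  | Snd X Y _ ih => exact .Snd _ _ ih
  | Decrypt K X _ _ ih _ => exact .Body _ _ ih

theorem synth_parts {invKey : ℕ → ℕ} {H : Set msg} {X Y : msg}
    (h : synthP (analz invKey H) X) (hY : partsP {X} Y) :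
    partsP H Y ∨ synthP (analz invKey H) Y := by
  induction h with
  | Inj X h => exact .inl (partsP_trans (analz_parts h) hY)
  | Ag a => rw [partsP_agent] at hY; subst hY; exact .inr (.Ag _)
  | Num a => rw [partsP_number] at hY; subst hY; exact .inr (.Num _)
  | Hsh X h _ => rw [partsP_hash] at hY; subst hY; exact .inr (.Hsh _ h)
  | Pr X Z h1 h2 ih1 ih2 =>
    rw [partsP_pair] at hY
    rcases hY with rfl | h | h
    · exact .inr (.Pr _ _ h1 h2)
    · exact ih1 h
    · exact ih2 h
  | Cry K X h hK ih =>
    rw [partsP_crypt] at hY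
    rcases hY with rfl | h'
    · exact .inr (.Cry _ _ h hK)
    · exact ih h'

theorem guard_pair {invKey : ℕ → ℕ} {n Ks X Y} (h : guardP invKey n Ks (msg.MPair X Y)) :
    guardP invKey n Ks X ∧ guardP invKey n Ks Y := by
  cases h with
  | No_Nonce _ h =>
    exact ⟨.No_Nonce _ fun h' => h ((partsP_pair _ _ _).2 (.inr (.inl h'))),
      .No_Nonce _ fun h' => h ((partsP_pair _ _ _).2 (.inr (.inr h')))⟩
  | Pr _ _ h1 h2 => exact ⟨h1, h2⟩

theorem guard_crypt {invKey : ℕ → ℕ} {n Ks K X} (h : guardP invKey n Ks (msg.Crypt K X)) :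
    invKey K ∈ Ks ∨ guardP invKey n Ks X := by
  cases h with
  | No_Nonce _ h =>
    exact .inr (.No_Nonce _ fun h' => h ((partsP_crypt _ _ _).2 (.inr h')))
  | Guard _ _ h => exact .inl h
  | Cry _ _ h => exact .inr h

theorem guard_nonce {invKey : ℕ → ℕ} {n Ks} (h : guardP invKey n Ks (msg.Nonce n)) : False := by
  cases h with
  | No_Nonce _ h => exact h (.Inj _ rfl)

theorem guard_analz {invKey : ℕ → ℕ} {n Ks H X} (hG : Guard invKey n Ks H)
    (hK : ∀ K ∈ Ks, ¬ partsP H (msg.Key K)) (h : analzP invKey H X) : guardP invKey n Ks X := by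
  induction h with
  | Inj X h => exact hG _ h
  | Fst X Y _ ih => exact (guard_pair ih).1
  | Snd X Y _ ih => exact (guard_pair ih).2
  | Decrypt K X _ hk ih _ =>
    rcases guard_crypt ih with h | h
    · exact absurd (analz_parts hk) (hK _ h)
    · exact h

theorem guard_synth {invKey : ℕ → ℕ} {n Ks H X} (hG : Guard invKey n Ks H)
    (hK : ∀ K ∈ Ks, ¬ partsP H (msg.Key K)) (h : synthP (analz invKey H) X) :
    guardP invKey n Ks X := by
  induction h with
  | Inj X h => exact guard_analz hG hK h
  | Ag a => exact .No_Nonce _ fun h => by cases (partsP_agent _ _).1 h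
  | Num a => exact .No_Nonce _ fun h => by cases (partsP_number _ _).1 h
  | Hsh X h _ => exact .No_Nonce _ fun h => by cases (partsP_hash _ _).1 h
  | Pr X Z h1 h2 ih1 ih2 => exact .Pr _ _ ih1 ih2
  | Cry K X h hK ih => exact .Cry _ _ ih

theorem spies_cons {invKey pubK bad evs P Q X Y}
    (h : Y ∈ spiesPK invKey pubK bad (event.Says P Q X :: evs)) :
    Y = X ∨ Y ∈ spiesPK invKey pubK bad evs := by
  rcases h with h | ⟨a, b, h⟩
  · exact .inr (.inl h)
  · rcases List.mem_cons.1 h with h | h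
    · cases h; exact .inl rfl
    · exact .inr (.inr ⟨a, b, h⟩)

theorem parts_cons {invKey pubK bad evs P Q X Y}
    (h : partsP (spiesPK invKey pubK bad (event.Says P Q X :: evs)) Y) :
    partsP {X} Y ∨ partsP (spiesPK invKey pubK bad evs) Y := by
  obtain ⟨Z, hZ, h'⟩ := (partsP_iff _ _).1 h
  rcases spies_cons hZ with hX | hZ
  · rw [hX] at h'
    exact .inl h'
  · exact .inr ((partsP_iff _ _).2 ⟨Z, hZ, h'⟩)

theorem parts_used {invKey pubK bad evs X} (h : partsP (spiesPK invKey pubK bad evs) X) :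
    X ∈ usedPK invKey pubK bad evs := by
  obtain ⟨Z, hZ, h⟩ := (partsP_iff _ _).1 h
  refine (partsP_iff _ _).2 ⟨Z, ?_, h⟩
  rcases hZ with hZ | hZ
  · exact .inl (Set.mem_iUnion.2 ⟨_, hZ⟩)
  · exact .inr hZ

theorem parts_says {invKey pubK bad evs P Q X Y} (h : event.Says P Q X ∈ evs)
    (hY : partsP {X} Y) : partsP (spiesPK invKey pubK bad evs) Y :=
  (partsP_iff _ _).2 ⟨X, .inr ⟨P, Q, h⟩, hY⟩

theorem keys_spies {invKey pubK bad evs k} (hevs : nsl invKey pubK bad evs)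
    (h : partsP (spiesPK invKey pubK bad evs) (msg.Key k)) :
    (∃ B ∈ bad, k = priK invKey pubK B) ∨ ∃ B, k = pubK B := by
  induction hevs with
  | Nil =>
    obtain ⟨Z, hZ, h⟩ := (partsP_iff _ _).1 h
    rcases hZ with (⟨B, hB, rfl⟩ | ⟨B, rfl⟩) | ⟨a, b, hZ⟩
    · have := (partsP_key _ _).1 h
      cases this; exact .inl ⟨B, hB, rfl⟩
    · have := (partsP_key _ _).1 h
      cases this; exact .inr ⟨B, rfl⟩
    · simp at hZ
  | Fake evs B X _ hX ih =>
    rcases parts_cons h with h | h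
    · rcases synth_parts hX h with h | h
      · exact ih h
      · cases h with
        | Inj _ h => exact ih (analz_parts h)
    · exact ih h
  | NS1 evs A B NA _ _ ih =>
    rcases parts_cons h with h | h
    · simp [partsP_crypt, partsP_pair, partsP_nonce, partsP_agent] at h
    · exact ih h
  | NS2 evs A A' B NA NB _ _ _ ih =>
    rcases parts_cons h with h | h
    · simp [partsP_crypt, partsP_pair, partsP_nonce, partsP_agent] at h
    · exact ih h
  | NS3 evs A B B' NA NB _ _ _ ih =>
    rcases parts_cons h with h | h
    · simp [partsP_crypt, partsP_nonce] at h
    · exact ih h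

theorem synth_nonce {invKey : ℕ → ℕ} {H : Set msg} {n : ℕ}
    (h : synthP (analz invKey H) (msg.Nonce n)) : analzP invKey H (msg.Nonce n) := by
  cases h with
  | Inj _ h => exact h

theorem synth_pair {invKey : ℕ → ℕ} {H : Set msg} {X Y : msg}
    (h : synthP (analz invKey H) (msg.MPair X Y)) :
    synthP (analz invKey H) X ∧ synthP (analz invKey H) Y := by
  cases h with
  | Inj _ h => exact ⟨.Inj _ (.Fst _ _ h), .Inj _ (.Snd _ _ h)⟩
  | Pr _ _ h1 h2 => exact ⟨h1, h2⟩

theorem synth_crypt {invKey : ℕ → ℕ} {H : Set msg} {K : ℕ} {X : msg}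
    (h : synthP (analz invKey H) (msg.Crypt K X)) :
    partsP H (msg.Crypt K X) ∨ synthP (analz invKey H) X := by
  cases h with
  | Inj _ h => exact .inl (analz_parts h)
  | Cry _ _ h _ => exact .inr h

/-- The invariant of the induction. -/
def NSLInv (invKey : ℕ → ℕ) (pubK : agent → ℕ) (bad : Set agent) (A B : agent) (NA : ℕ)
    (evs : List event) : Prop :=
  Guard invKey NA {priK invKey pubK A, priK invKey pubK B} (spiesPK invKey pubK bad evs) ∧
  (∀ K C, partsP (spiesPK invKey pubK bad evs)
    (msg.Crypt K (msg.MPair (msg.Nonce NA) (msg.Agent C))) → C = A ∧ K = pubK B) ∧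
  (∀ K X C, ¬ partsP (spiesPK invKey pubK bad evs)
    (msg.Crypt K (msg.MPair X (msg.MPair (msg.Nonce NA) (msg.Agent C)))))

theorem NSLInv_cons {invKey pubK bad A B NA evs P Q X} (hI : NSLInv invKey pubK bad A B NA evs)
    (h1 : guardP invKey NA {priK invKey pubK A, priK invKey pubK B} X)
    (h2 : ∀ K C, partsP {X} (msg.Crypt K (msg.MPair (msg.Nonce NA) (msg.Agent C))) →
      C = A ∧ K = pubK B)
    (h3 : ∀ K Y C, ¬ partsP {X}
      (msg.Crypt K (msg.MPair Y (msg.MPair (msg.Nonce NA) (msg.Agent C))))) :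
    NSLInv invKey pubK bad A B NA (event.Says P Q X :: evs) := by
  obtain ⟨i1, i2, i3⟩ := hI
  refine ⟨fun Y hY => ?_, fun K C h => ?_, fun K Y C h => ?_⟩
  · rcases spies_cons hY with rfl | h
    · exact h1
    · exact i1 _ h
  · rcases parts_cons h with h | h
    · exact h2 _ _ h
    · exact i2 _ _ h
  · rcases parts_cons h with h | h
    · exact h3 _ _ _ h
    · exact i3 _ _ _ h

theorem NSLInv_nsl (invKey : ℕ → ℕ) (pubK : agent → ℕ) (bad : Set agent)
    (hpri : Function.Injective (priK invKey pubK))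
    (hpubpri : ∀ A B : agent, pubK A ≠ priK invKey pubK B)
    (hspy : agent.Spy ∈ bad)
    (evs : List event) (A B : agent) (NA : ℕ)
    (hevs : nsl invKey pubK bad evs) (hA : A ∉ bad) (hB : B ∉ bad)
    (hsays : event.Says A B (msg.Crypt (pubK B) (msg.MPair (msg.Nonce NA) (msg.Agent A))) ∈ evs) :
    NSLInv invKey pubK bad A B NA evs := by
  have hNA : ∀ evs, event.Says A B
      (msg.Crypt (pubK B) (msg.MPair (msg.Nonce NA) (msg.Agent A))) ∈ evs →
      msg.Nonce NA ∈ usedPK invKey pubK bad evs := fun evs h =>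
    parts_used (parts_says h (.Fst _ _ (.Body _ _ (.Inj _ rfl))))
  induction hevs with
  | Nil => simp at hsays
  | Fake evs C X hevs hX ih =>
    rcases List.mem_cons.1 hsays with h | h
    · cases h; exact absurd hspy hA
    have hI := ih h
    have hK : ∀ K ∈ ({priK invKey pubK A, priK invKey pubK B} : Set ℕ),
        ¬ partsP (spiesPK invKey pubK bad evs) (msg.Key K) := by
      intro K hK hp
      have hk := keys_spies hevs hp
      rcases hK with rfl | rfl
      · rcases hk with ⟨D, hD, h⟩ | ⟨D, h⟩
        · exact hA (hpri h ▸ hD)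
        · exact hpubpri _ _ h.symm
      · rcases hk with ⟨D, hD, h⟩ | ⟨D, h⟩
        · exact hB (hpri h ▸ hD)
        · exact hpubpri _ _ h.symm
    have hN : ¬ synthP (analz invKey (spiesPK invKey pubK bad evs)) (msg.Nonce NA) := fun h =>
      guard_nonce (guard_synth hI.1 hK h)
    refine NSLInv_cons hI (guard_synth hI.1 hK hX) (fun K C h => ?_) (fun K Y C h => ?_)
    · rcases synth_parts hX h with h | h
      · exact hI.2.1 _ _ h
      rcases synth_crypt h with h | h
      · exact hI.2.1 _ _ h
      · exact absurd (synth_pair h).1 hN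
    · rcases synth_parts hX h with h | h
      · exact hI.2.2 _ _ _ h
      rcases synth_crypt h with h | h
      · exact hI.2.2 _ _ _ h
      · exact absurd (synth_pair (synth_pair h).2).1 hN
  | NS1 evs A' B' NA' hevs hf ih =>
    rcases List.mem_cons.1 hsays with h | h
    · cases h
      refine NSLInv_cons ⟨fun Y hY => ?_, fun K C h => ?_, fun K Y C h => ?_⟩
        (.Guard _ _ (.inr rfl)) (fun K C h => ?_) (fun K Y C h => ?_)
      · exact .No_Nonce _ fun h => hf (parts_used ((partsP_iff _ _).2 ⟨Y, hY, h⟩))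
      · exact absurd (parts_used (.Fst _ _ (.Body _ _ h))) hf
      · exact absurd (parts_used (.Fst _ _ (.Snd _ _ (.Body _ _ h)))) hf
      · simp [partsP_crypt, partsP_pair, partsP_nonce, partsP_agent] at h
        tauto
      · simp [partsP_crypt, partsP_pair, partsP_nonce, partsP_agent] at h
    · have hne : NA ≠ NA' := by rintro rfl; exact hf (hNA _ h)
      refine NSLInv_cons (ih h) (.No_Nonce _ fun h => ?_) (fun K C h => ?_) (fun K Y C h => ?_)
      · change partsP _ _ at h
        simp [partsP_crypt, partsP_pair, partsP_nonce, partsP_agent] at h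
        tauto
      · simp [partsP_crypt, partsP_pair, partsP_nonce, partsP_agent] at h
        tauto
      · simp [partsP_crypt, partsP_pair, partsP_nonce, partsP_agent] at h
  | NS2 evs A1 A' B1 NA1 NB hevs hf hs ih =>
    rcases List.mem_cons.1 hsays with h | h
    · cases h
    have hne : NA ≠ NB := by rintro rfl; exact hf (hNA _ h)
    have hI := ih h
    refine NSLInv_cons hI ?_ (fun K C h => ?_) (fun K Y C h => ?_)
    · by_cases hn : NA1 = NA
      · subst hn
        obtain ⟨rfl, -⟩ := hI.2.1 _ _ (parts_says hs (.Inj _ rfl))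
        exact .Guard _ _ (.inl rfl)
      · refine .No_Nonce _ fun h => ?_
        change partsP _ _ at h
        simp [partsP_crypt, partsP_pair, partsP_nonce, partsP_agent] at h
        rcases h with h | h
        · exact hn h.symm
        · exact hne h
    · simp [partsP_crypt, partsP_pair, partsP_nonce, partsP_agent] at h
    · simp [partsP_crypt, partsP_pair, partsP_nonce, partsP_agent] at h
      tauto
  | NS3 evs A1 B1 B' NA1 NB hevs hs1 hs2 ih =>
    rcases List.mem_cons.1 hsays with h | h
    · cases h
    have hI := ih h
    have hne : NA ≠ NB := by
      rintro rfl
      exact hI.2.2 _ _ _ (parts_says hs2 (.Inj _ rfl))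
    refine NSLInv_cons hI (.No_Nonce _ fun h => ?_) (fun K C h => ?_) (fun K Y C h => ?_)
    · change partsP _ _ at h
      simp [partsP_crypt, partsP_nonce] at h
      exact hne h
    · simp [partsP_crypt, partsP_nonce] at h
    · simp [partsP_crypt, partsP_nonce] at h

/-- `Guard_NA` for Needham–Schroeder–Lowe. -/
theorem Guard_NA
    (invKey : ℕ → ℕ) (pubK : agent → ℕ) (bad : Set agent)
    (hinv : ∀ K, invKey (invKey K) = K)
    (hpub : Function.Injective pubK)
    (hpri : Function.Injective (priK invKey pubK))
    (hpubpri : ∀ A B : agent, pubK A ≠ priK invKey pubK B)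
    (hspy : agent.Spy ∈ bad)
    (evs : List event) (A B : agent) (NA : ℕ)
    (hevs : nsl invKey pubK bad evs) (hA : A ∉ bad) (hB : B ∉ bad)
    (hsays : event.Says A B (msg.Crypt (pubK B) (msg.MPair (msg.Nonce NA) (msg.Agent A))) ∈ evs) :
    Guard invKey NA {priK invKey pubK A, priK invKey pubK B} (spiesPK invKey pubK bad evs) := by
  exact (NSLInv_nsl invKey pubK bad hpri hpubpri hspy evs A B NA hevs hA hB hsays).1
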